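/- arXiv:2207.13546 — 4 statements merged into one kernel-verified Lean document; each statement's English description precedes it below -/
import Mathlib

section
/- Let M be the ℤ-module of all ℤ-linear maps φ : ℤ[s,s⁻¹] → ℤ such that φ((1−s)^N · f) = 0 for all Laurent polynomials f and some natural number N (depending on φ). Then: (i) for each k ∈ ℕ the map φ^k lies in M (indeed φ^k vanishes on the ideal (1−s)^{k+1}); and (ii) M is a free ℤ-module with basis {φ^k : k ∈ ℕ}, i.e. every element of M is a unique finite ℤ-linear combination of the maps φ^k. -/
/-!
The map `φ^k` reads off the `k`-th coefficient of the Taylor expansion of a Laurent polynomial at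
`s = 1`, in powers of `1 - s`: formally `sⁿ = (1 - (1 - s))ⁿ = ∑ (-1)^k C(n,k) (1 - s)^k`. Pascal's
rule says that multiplication by `1 - s` shifts these coefficients, so `φ^k` kills the multiples of
`(1 - s)^(k+1)` and the powers of `1 - s` are dual to the `φ^k`. Conversely, every `f` is congruent
to `∑_{k < N} φ^k(f) (1 - s)^k` modulo `(1 - s)^N`; a linear map `ψ` killing the multiples of
`(1 - s)^N` is therefore `∑_{k < N} ψ((1 - s)^k) φ^k`.
-/

open LaurentPolynomial

theorem laurentPolynomial_linearMap_ext {R M : Type*} [Semiring R] [AddCommMonoid M] [Module R M]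
    {φ ψ : R[T;T⁻¹] →ₗ[R] M} (h : ∀ n, φ (T n) = ψ (T n)) : φ = ψ :=
  (AddMonoidAlgebra.basis ℤ R).ext h

theorem one_sub_T_one_dvd_one_sub_T {R : Type*} [Ring R] (n : ℤ) :
    (1 - T 1 : R[T;T⁻¹]) ∣ 1 - T n := by
  have dvd_T_sub (m : ℤ) : (1 - T 1 : R[T;T⁻¹]) ∣ T m - T (m + 1) :=
    ⟨T m, by rw [sub_mul, one_mul, ← T_add, add_comm]⟩
  induction n with
  | zero => simp only [T_zero, sub_self, dvd_zero]
  | succ m ih => simpa only [sub_add_sub_cancel] using ih.add (dvd_T_sub m)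
  | pred m ih =>
    simpa only [sub_add_cancel, sub_sub_sub_cancel_right] using ih.sub (dvd_T_sub (-m - 1))

section CommRing

variable {R M : Type*} [CommRing R] [AddCommGroup M] [Module R M]

variable (R) in
/-- The `k`-th coefficient of the Taylor expansion at `1` of a Laurent polynomial, in powers of
`1 - T 1`. This is the map `φ^k`, over an arbitrary coefficient ring. -/
noncomputable def taylorCoeff (k : ℕ) : R[T;T⁻¹] →ₗ[R] R :=
  (AddMonoidAlgebra.basis ℤ R).constr R fun n => (-1) ^ k * (Ring.choose n k : ℤ)

theorem taylorCoeff_T (k : ℕ) (n : ℤ) :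
    taylorCoeff R k (T n) = (-1) ^ k * (Ring.choose n k : ℤ) :=
  (AddMonoidAlgebra.basis ℤ R).constr_basis R _ n

theorem taylorCoeff_zero_one_sub_T_one_mul (f : R[T;T⁻¹]) :
    taylorCoeff R 0 ((1 - T 1) * f) = 0 := by
  suffices taylorCoeff R 0 ∘ₗ LinearMap.mulLeft R (1 - T 1) = 0 from LinearMap.congr_fun this f
  refine laurentPolynomial_linearMap_ext fun n => ?_
  simp only [LinearMap.comp_apply, LinearMap.mulLeft_apply, sub_mul, one_mul, ← T_add, map_sub,
    taylorCoeff_T, Ring.choose_zero_right, sub_self, LinearMap.zero_apply]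

theorem taylorCoeff_succ_one_sub_T_one_mul (k : ℕ) (f : R[T;T⁻¹]) :
    taylorCoeff R (k + 1) ((1 - T 1) * f) = taylorCoeff R k f := by
  suffices taylorCoeff R (k + 1) ∘ₗ LinearMap.mulLeft R (1 - T 1) = taylorCoeff R k from
    LinearMap.congr_fun this f
  refine laurentPolynomial_linearMap_ext fun n => ?_
  simp only [LinearMap.comp_apply, LinearMap.mulLeft_apply, sub_mul, one_mul, ← T_add, map_sub,
    taylorCoeff_T, add_comm 1 n, Ring.choose_succ_succ, Int.cast_add]
  ring

theorem taylorCoeff_add_one_sub_T_one_pow_mul (k j : ℕ) (f : R[T;T⁻¹]) :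
    taylorCoeff R (k + j) ((1 - T 1) ^ j * f) = taylorCoeff R k f := by
  induction j with
  | zero => rw [add_zero, pow_zero, one_mul]
  | succ j ih => rw [pow_succ', mul_assoc, ← add_assoc, taylorCoeff_succ_one_sub_T_one_mul, ih]

theorem taylorCoeff_one_sub_T_one_pow_mul_of_lt {k j : ℕ} (h : k < j) (f : R[T;T⁻¹]) :
    taylorCoeff R k ((1 - T 1) ^ j * f) = 0 := by
  obtain ⟨i, rfl⟩ := Nat.exists_eq_add_of_lt h
  have shift := taylorCoeff_add_one_sub_T_one_pow_mul 0 k ((1 - T 1) * ((1 - T 1) ^ i * f))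
  rwa [taylorCoeff_zero_one_sub_T_one_mul, zero_add, ← mul_assoc (1 - T 1), ← pow_succ',
    ← mul_assoc, ← pow_add] at shift

theorem taylorCoeff_one (k : ℕ) : taylorCoeff R k 1 = if k = 0 then 1 else 0 := by
  rw [← T_zero, taylorCoeff_T, Ring.choose_zero_ite]
  split_ifs with hk <;> simp [hk]

theorem taylorCoeff_one_sub_T_one_pow (k j : ℕ) :
    taylorCoeff R k ((1 - T 1) ^ j) = if k = j then 1 else 0 := by
  rw [← mul_one ((1 - T 1) ^ j)]
  rcases lt_or_ge k j with h | h
  · rw [taylorCoeff_one_sub_T_one_pow_mul_of_lt h, if_neg h.ne]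
  · obtain ⟨i, rfl⟩ := Nat.exists_eq_add_of_le' h
    simp only [taylorCoeff_add_one_sub_T_one_pow_mul, taylorCoeff_one, Nat.add_eq_right]

theorem one_sub_T_one_dvd_sub_C_taylorCoeff_zero (f : R[T;T⁻¹]) :
    1 - T 1 ∣ f - C (taylorCoeff R 0 f) := by
  induction f using LaurentPolynomial.induction_on' with
  | add f g hf hg => simpa only [map_add, add_sub_add_comm] using hf.add hg
  | C_mul_T n a =>
    have coeff_zero : taylorCoeff R 0 (C a * T n) = a := by
      rw [← smul_eq_C_mul, map_smul, taylorCoeff_T, Ring.choose_zero_right, pow_zero, one_mul,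
        Int.cast_one, smul_eq_mul, mul_one]
    rw [coeff_zero, dvd_sub_comm, ← mul_one_sub]
    exact (one_sub_T_one_dvd_one_sub_T n).mul_left _

theorem one_sub_T_one_pow_dvd_sub_sum_taylorCoeff (N : ℕ) (f : R[T;T⁻¹]) :
    (1 - T 1) ^ N ∣ f - ∑ k ∈ Finset.range N, taylorCoeff R k f • (1 - T 1) ^ k := by
  induction N with
  | zero => simp only [pow_zero, isUnit_one, IsUnit.dvd]
  | succ N ih =>
    obtain ⟨g, hg⟩ := ih
    have coeff_eq : taylorCoeff R N f = taylorCoeff R 0 g := by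
      rw [← taylorCoeff_add_one_sub_T_one_pow_mul 0 N g, zero_add, ← hg]
      simp [taylorCoeff_one_sub_T_one_pow]
    rw [Finset.sum_range_succ, ← sub_sub, hg, coeff_eq, smul_eq_C_mul, mul_comm (C _), ← mul_sub,
      pow_succ]
    exact mul_dvd_mul_left _ (one_sub_T_one_dvd_sub_C_taylorCoeff_zero g)

theorem apply_eq_sum_taylorCoeff_smul {ψ : R[T;T⁻¹] →ₗ[R] M} {N : ℕ}
    (hψ : ∀ f, ψ ((1 - T 1) ^ N * f) = 0) (f : R[T;T⁻¹]) :
    ψ f = ∑ k ∈ Finset.range N, taylorCoeff R k f • ψ ((1 - T 1) ^ k) := by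
  obtain ⟨g, hg⟩ := one_sub_T_one_pow_dvd_sub_sum_taylorCoeff N f
  have apply_eq := hψ g
  rw [← hg, map_sub, sub_eq_zero, map_sum] at apply_eq
  simpa only [map_smul] using apply_eq

theorem sum_taylorCoeff_smulRight_one_sub_T_one_pow (c : ℕ →₀ M) (j : ℕ) :
    (c.sum fun k a => (taylorCoeff R k).smulRight a) ((1 - T 1) ^ j) = c j := by
  simp [Finsupp.sum, LinearMap.sum_apply, taylorCoeff_one_sub_T_one_pow, eq_comm]

theorem existsUnique_eq_sum_taylorCoeff_smulRight {ψ : R[T;T⁻¹] →ₗ[R] M} {N : ℕ}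
    (hψ : ∀ f, ψ ((1 - T 1) ^ N * f) = 0) :
    ∃! c : ℕ →₀ M, ψ = c.sum fun k a => (taylorCoeff R k).smulRight a := by
  refine ⟨Finsupp.onFinset (Finset.range N) (fun k => ψ ((1 - T 1) ^ k)) fun k hk => ?_, ?_, ?_⟩
  · contrapose! hk
    obtain ⟨i, rfl⟩ := Nat.exists_eq_add_of_le (by simpa using hk)
    rw [pow_add, hψ]
  · refine LinearMap.ext fun f => ?_
    rw [Finsupp.onFinset_sum _ fun k => LinearMap.smulRight_zero (taylorCoeff R k)]
    simpa only [LinearMap.sum_apply, LinearMap.smulRight_apply] using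
      apply_eq_sum_taylorCoeff_smul hψ f
  · rintro d rfl
    ext j
    simp only [Finsupp.onFinset_apply, sum_taylorCoeff_smulRight_one_sub_T_one_pow]

theorem stmt_2_general (φ : ℕ → R[T;T⁻¹] →ₗ[R] R)
    (hφ : ∀ (k : ℕ) (n : ℤ), φ k (T n) = (-1) ^ k * (Ring.choose n k : ℤ)) :
    (∀ (k : ℕ) (f : R[T;T⁻¹]), φ k ((1 - T 1) ^ (k + 1) * f) = 0) ∧
    (∀ ψ : R[T;T⁻¹] →ₗ[R] M, (∃ N : ℕ, ∀ f : R[T;T⁻¹], ψ ((1 - T 1) ^ N * f) = 0) →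
      ∃! c : ℕ →₀ M, ψ = c.sum fun k a => (φ k).smulRight a) := by
  obtain rfl : φ = taylorCoeff R := funext fun k =>
    laurentPolynomial_linearMap_ext fun n => by rw [hφ, taylorCoeff_T]
  exact ⟨fun k => taylorCoeff_one_sub_T_one_pow_mul_of_lt k.lt_succ_self,
    fun _ ⟨_, hψ⟩ => existsUnique_eq_sum_taylorCoeff_smulRight hψ⟩

end CommRing

/-- Let `M` be the ℤ-module of ℤ-linear maps `ψ : ℤ[s,s⁻¹] → ℤ` that kill
`(1-s)^N · f` for all `f` and some `N`.  The maps `φ^k` (determined on monomials by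
`φ^k(sⁿ) = (-1)^k C(n,k)`) lie in `M` (indeed `φ^k` kills the ideal `(1-s)^(k+1)`), and
every element of `M` is a unique finite ℤ-linear combination of the `φ^k`. -/
theorem stmt_2 (φk : ℕ → (LaurentPolynomial ℤ →ₗ[ℤ] ℤ))
    (hφk : ∀ (k : ℕ) (n : ℤ),
      φk k (LaurentPolynomial.T n) = (-1) ^ k * Ring.choose n k) :
    (∀ (k : ℕ) (f : LaurentPolynomial ℤ),
        φk k ((1 - LaurentPolynomial.T 1) ^ (k + 1) * f) = 0) ∧
    (∀ ψ : LaurentPolynomial ℤ →ₗ[ℤ] ℤ,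
        (∃ N : ℕ, ∀ f : LaurentPolynomial ℤ,
            ψ ((1 - LaurentPolynomial.T 1) ^ N * f) = 0) →
        ∃! c : ℕ →₀ ℤ, ψ = c.sum fun k a => a • φk k) := by
  have smulRight_eq (k : ℕ) (a : ℤ) : (φk k).smulRight a = a • φk k :=
    LinearMap.ext fun f => mul_comm (φk k f) a
  simpa only [smulRight_eq] using stmt_2_general (M := ℤ) φk (by simpa using hφk)
end

section
/- Let F be a field. Then: (i) ρ_K(p) = 0 for every Laurent polynomial p ∈ F[z,z⁻¹]; and (ii) for all natural numbers n ≥ 1, k ≥ 0 and 0 ≤ a < n, one has ρ_K( z^{nk+a} / (1−zⁿ)^{k+1} ) = 1 if k = 0 and a = 0, and 0 otherwise. (That is, ρ_K satisfies the normalization constraints of a residue map for the K-theory of Deligne–Mumford stacks.) -/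
open scoped LaurentSeries

/-- The constant coefficient (coefficient of `z⁰`) of the formal Laurent-series expansion
at `z = 0` of a rational function. -/
noncomputable def laurentCoeffZero {F : Type*} [Field F] (f : RatFunc F) : F :=
  ((f : LaurentSeries F)).coeff 0

/-- The K-theoretic residue map `ρ_K(f) := (coeff of z⁰ of the expansion of f at 0) −
(coeff of z⁰ of the expansion at 0 of f(z⁻¹))`, where `f ↦ f(z⁻¹)` is the `F`-algebra
automorphism `ι` of `F(z)` with `ι(z) = z⁻¹`. -/
noncomputable def rhoK {F : Type*} [Field F] (ι : RatFunc F ≃ₐ[F] RatFunc F)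
    (f : RatFunc F) : F :=
  laurentCoeffZero f - laurentCoeffZero (ι f)

/-!
The map `ρ_K` is additive and kills each `c z^j`, since `z^j` and `z^{-j}` have the same constant
coefficient; hence it kills Laurent polynomials.

A rational function `p / q` with `q(0) ≠ 0` is regular at `0`, and the constant coefficient of its
expansion there is its value `p(0) / q(0)`. When moreover `deg p ≤ deg q = N`, it is also regular at
`∞`: substituting `z⁻¹` reverses both coefficient lists up to the common factor `z⁻ᴺ`, so its value
at `∞` is the ratio of the coefficients of `zᴺ`. Thus `ρ_K(p / q)` is the value at `0` minus the
value at `∞`. For `z^m / (1 - zⁿ)^k` with `m < nk` the value at `∞` vanishes, and the value at `0`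
is `1` if `m = 0` and `0` otherwise.
-/

section

open Polynomial

lemma aeval_inv_eq_aeval_reflect_div {R K : Type*} [CommSemiring R] [Semifield K] [Algebra R K]
    {x : K} (hx : x ≠ 0) {p : R[X]} {N : ℕ} (hp : p.natDegree ≤ N) :
    aeval x⁻¹ p = aeval x (p.reflect N) / x ^ N := by
  let _ : Invertible x⁻¹ := invertibleOfNonzero (inv_ne_zero hx)
  simpa only [invOf_eq_inv, inv_inv, inv_pow, ← div_eq_mul_inv, ← aeval_def] using
    (eval₂_reflect_mul_pow (algebraMap R K) x⁻¹ N p hp).symm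

variable {F : Type*} [Field F]

lemma laurentCoeffZero_add (f g : RatFunc F) :
    laurentCoeffZero (f + g) = laurentCoeffZero f + laurentCoeffZero g := by
  simp [laurentCoeffZero]

lemma coe_algebraMap_polynomial (p : F[X]) :
    ((algebraMap F[X] (RatFunc F) p : RatFunc F) : LaurentSeries F) = (p : PowerSeries F) := by
  rw [← RatFunc.coePolynomial_eq_algebraMap, RatFunc.coe_coe]

lemma coe_ratFunc_C_mul_X_zpow (c : F) (j : ℤ) :
    ((RatFunc.C c * RatFunc.X ^ j : RatFunc F) : LaurentSeries F) = HahnSeries.single j c := by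
  have hC : ((RatFunc.C c : RatFunc F) : LaurentSeries F) = HahnSeries.C c := by
    rw [← RatFunc.algebraMap_C, coe_algebraMap_polynomial, Polynomial.coe_C, PowerSeries.coe_C]
  rw [map_mul, map_zpow₀, hC, RatFunc.coe_X, ← RatFunc.single_zpow, HahnSeries.C_apply,
    HahnSeries.single_mul_single, zero_add, mul_one]

lemma laurentCoeffZero_C_mul_X_zpow (c : F) (j : ℤ) :
    laurentCoeffZero (RatFunc.C c * RatFunc.X ^ j) = if j = 0 then c else 0 := by
  simp only [laurentCoeffZero, coe_ratFunc_C_mul_X_zpow, HahnSeries.coeff_single, eq_comm]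

lemma laurentCoeffZero_algebraMap_div (p : F[X]) {q : F[X]} (hq : q.coeff 0 ≠ 0) :
    laurentCoeffZero (algebraMap F[X] (RatFunc F) p / algebraMap F[X] (RatFunc F) q) =
      p.coeff 0 / q.coeff 0 := by
  have hcancel : (q : PowerSeries F)⁻¹ * q = 1 :=
    PowerSeries.inv_mul_cancel _ (by simpa using hq)
  have hinv : ((q : PowerSeries F) : LaurentSeries F)⁻¹ =
      ((q : PowerSeries F)⁻¹ : PowerSeries F) :=
    (eq_inv_of_mul_eq_one_left (by rw [← PowerSeries.coe_mul, hcancel, PowerSeries.coe_one])).symm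
  have hexpand : ((algebraMap F[X] (RatFunc F) p / algebraMap F[X] (RatFunc F) q : RatFunc F) :
      LaurentSeries F) = ((p * (q : PowerSeries F)⁻¹ : PowerSeries F) : LaurentSeries F) := by
    rw [map_div₀, coe_algebraMap_polynomial, coe_algebraMap_polynomial, div_eq_mul_inv, hinv,
      PowerSeries.coe_mul]
  rw [laurentCoeffZero, hexpand, PowerSeries.coeff_coe]
  simp [div_eq_mul_inv]

variable (ι : RatFunc F ≃ₐ[F] RatFunc F)

lemma rhoK_zero : rhoK ι 0 = 0 := by
  rw [rhoK, map_zero, sub_self]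

lemma rhoK_add (f g : RatFunc F) : rhoK ι (f + g) = rhoK ι f + rhoK ι g := by
  simp only [rhoK, map_add, laurentCoeffZero_add]
  ring

variable {ι} (hι : ι RatFunc.X = RatFunc.X⁻¹)
include hι

lemma rhoK_C_mul_X_zpow (c : F) (j : ℤ) : rhoK ι (RatFunc.C c * RatFunc.X ^ j) = 0 := by
  have hmap : ι (RatFunc.C c * RatFunc.X ^ j) = RatFunc.C c * RatFunc.X ^ (-j) := by
    rw [map_mul, ← RatFunc.algebraMap_eq_C, AlgEquiv.commutes, map_zpow₀, hι, inv_zpow']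
  simp only [rhoK, hmap, laurentCoeffZero_C_mul_X_zpow, neg_eq_zero, sub_self]

lemma rhoK_sum_C_mul_X_zpow (p : ℤ →₀ F) :
    rhoK ι (p.sum fun j c => RatFunc.C c * RatFunc.X ^ j) = 0 := by
  induction p using Finsupp.induction_linear with
  | zero => rw [Finsupp.sum_zero_index, rhoK_zero]
  | add p q hp hq =>
    rw [Finsupp.sum_add_index' (by simp) (by simp [add_mul]), rhoK_add, hp, hq, add_zero]
  | single j c => rw [Finsupp.sum_single_index (by simp), rhoK_C_mul_X_zpow hι]

lemma algEquiv_algebraMap_eq_reflect_div {p : F[X]} {N : ℕ} (hp : p.natDegree ≤ N) :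
    ι (algebraMap F[X] (RatFunc F) p) =
      algebraMap F[X] (RatFunc F) (p.reflect N) / RatFunc.X ^ N := by
  have haeval (r : F[X]) : algebraMap F[X] (RatFunc F) r = aeval RatFunc.X r := by
    rw [← RatFunc.algebraMap_X, aeval_algebraMap_apply, aeval_X_left_apply]
  rw [haeval, haeval, ← aeval_algHom_apply, hι,
    aeval_inv_eq_aeval_reflect_div RatFunc.X_ne_zero hp]

lemma rhoK_algebraMap_div {p q : F[X]} (hdeg : p.natDegree ≤ q.natDegree) (hq : q.coeff 0 ≠ 0) :
    rhoK ι (algebraMap F[X] (RatFunc F) p / algebraMap F[X] (RatFunc F) q) =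
      p.coeff 0 / q.coeff 0 - p.coeff q.natDegree / q.leadingCoeff := by
  have hreverse : q.reverse.coeff 0 ≠ 0 := by
    rw [coeff_zero_reverse, leadingCoeff_ne_zero]
    rintro rfl
    exact hq (coeff_zero 0)
  have hmap : ι (algebraMap F[X] (RatFunc F) p / algebraMap F[X] (RatFunc F) q) =
      algebraMap F[X] (RatFunc F) (p.reflect q.natDegree) /
        algebraMap F[X] (RatFunc F) q.reverse := by
    rw [map_div₀, algEquiv_algebraMap_eq_reflect_div hι hdeg,
      algEquiv_algebraMap_eq_reflect_div hι le_rfl,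
      div_div_div_cancel_right₀ (pow_ne_zero _ RatFunc.X_ne_zero), reverse]
  rw [rhoK, hmap, laurentCoeffZero_algebraMap_div p hq, laurentCoeffZero_algebraMap_div _ hreverse,
    coeff_reflect, revAt_zero, coeff_zero_reverse]

lemma rhoK_X_pow_div_one_sub_X_pow {n k m : ℕ} (hm : m < n * k) :
    rhoK ι (RatFunc.X ^ m / (1 - RatFunc.X ^ n) ^ k) = if m = 0 then 1 else 0 := by
  have hn : n ≠ 0 := by rintro rfl; simp at hm
  have hdeg : ((1 - X ^ n : F[X]) ^ k).natDegree = n * k := by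
    rw [natDegree_pow, natDegree_sub, ← C_1, natDegree_X_pow_sub_C, mul_comm]
  have hcoeff : ((1 - X ^ n : F[X]) ^ k).coeff 0 = 1 := by
    simp [coeff_zero_eq_eval_zero, hn]
  have hquot : (RatFunc.X ^ m / (1 - RatFunc.X ^ n) ^ k : RatFunc F) =
      algebraMap F[X] (RatFunc F) (X ^ m) /
        algebraMap F[X] (RatFunc F) ((1 - X ^ n) ^ k) := by
    simp only [map_pow, map_sub, map_one, RatFunc.algebraMap_X]
  have hle : (X ^ m : F[X]).natDegree ≤ ((1 - X ^ n : F[X]) ^ k).natDegree := by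
    rw [hdeg, natDegree_X_pow]
    exact hm.le
  rw [hquot, rhoK_algebraMap_div hι hle (by simp [hcoeff]), hcoeff, hdeg, coeff_X_pow, coeff_X_pow,
    if_neg hm.ne', zero_div, sub_zero, div_one]
  simp only [eq_comm]

end

/-- (i) `ρ_K` vanishes on every Laurent polynomial `Σ_j c_j z^j`; and
(ii) for `n ≥ 1`, `k ≥ 0`, `0 ≤ a < n`, `ρ_K(z^{nk+a}/(1-zⁿ)^{k+1})` equals `1` if
`k = a = 0` and `0` otherwise. -/
theorem stmt_11 {F : Type*} [Field F] (ι : RatFunc F ≃ₐ[F] RatFunc F)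
    (hι : ι RatFunc.X = RatFunc.X⁻¹) :
    (∀ p : ℤ →₀ F,
        rhoK ι (p.sum fun j a => RatFunc.C a * RatFunc.X ^ j) = 0) ∧
    ∀ n : ℕ, 1 ≤ n → ∀ k a : ℕ, a < n →
      rhoK ι (RatFunc.X ^ (n * k + a) / (1 - RatFunc.X ^ n) ^ (k + 1))
        = if k = 0 ∧ a = 0 then 1 else 0 := by
  refine ⟨rhoK_sum_C_mul_X_zpow hι, fun n hn k a ha => ?_⟩
  have hdeg : n * k + a < n * (k + 1) := by rw [mul_add_one]; omega
  have hzero : n * k + a = 0 ↔ k = 0 ∧ a = 0 := by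
    rw [Nat.add_eq_zero_iff, mul_eq_zero_iff_left (by omega)]
  simp only [rhoK_X_pow_div_one_sub_X_pow hι hdeg, hzero]
end

section
/- For all natural numbers a, b, c, all symmetric Laurent polynomials f ∈ S_a^±, g ∈ S_b^±, h ∈ S_c^±, and formal variables z, w, the weak associativity identity Y(Y(f,z)g, w)h = Y(f,zw)(Y(g,w)h) holds in S_{a+b+c}^±[z,z⁻¹,w,w⁻¹]. -/
open scoped BigOperators

noncomputable section

/-- `L n` is the ring of Laurent polynomials over `ℚ` in the `n` variables `s₁, …, s_n`,
realized as the monoid algebra of the exponent group `Fin n → ℤ`. -/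
abbrev L (n : ℕ) : Type := AddMonoidAlgebra ℚ (Fin n → ℤ)

/-- `LL n A` is the ring of Laurent polynomials over `ℚ` in the variables `s₁, …, s_n`
together with extra formal variables whose exponents lie in the abelian group `A`
(e.g. `A = ℤ` for one variable `z`, `A = ℤ × ℤ` for two variables `z, w`). -/
abbrev LL (n : ℕ) (A : Type) [AddCommGroup A] : Type :=
  AddMonoidAlgebra ℚ ((Fin n → ℤ) × A)

/-- The ring homomorphism between monoid algebras induced by a map of exponent groups. -/
def mdr {G H : Type} [AddCommMonoid G] [AddCommMonoid H] (f : G →+ H) :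
    AddMonoidAlgebra ℚ G →+* AddMonoidAlgebra ℚ H :=
  AddMonoidAlgebra.mapDomainRingHom ℚ f

/-- The action of a permutation `σ` of the variables on exponents: `s_i ↦ s_{σ(i)}`. -/
def permHomL {n : ℕ} (σ : Equiv.Perm (Fin n)) : (Fin n → ℤ) →+ (Fin n → ℤ) :=
  AddMonoidHom.mk' (fun μ => μ ∘ σ.symm) (fun _ _ => rfl)

/-- The action of a permutation of the variables `s₁, …, s_n` on `L n`. -/
def permL {n : ℕ} (σ : Equiv.Perm (Fin n)) : L n →+* L n := mdr (permHomL σ)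

/-- A Laurent polynomial in `s₁, …, s_n` is symmetric if it is fixed by all permutations
of the variables; `SymmLaurent f` says `f ∈ S_n^±`. -/
def SymmLaurent {n : ℕ} (f : L n) : Prop := ∀ σ : Equiv.Perm (Fin n), permL σ f = f

/-- Permutations act on `LL n A` through the `s`-exponents only. -/
def permHomLL {n : ℕ} {A : Type} [AddCommGroup A] (σ : Equiv.Perm (Fin n)) :
    ((Fin n → ℤ) × A) →+ ((Fin n → ℤ) × A) :=
  AddMonoidHom.mk' (fun p => (p.1 ∘ σ.symm, p.2)) (fun _ _ => rfl)

/-- The action of a permutation of the variables on `LL n A`. -/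
def permLL {n : ℕ} {A : Type} [AddCommGroup A] (σ : Equiv.Perm (Fin n)) :
    LL n A →+* LL n A := mdr (permHomLL σ)

/-- Extension by zero of an exponent vector on the first `a` of `a + b` variables. -/
def extA (a b : ℕ) (μ : Fin a → ℤ) : Fin (a + b) → ℤ :=
  fun i => if h : (i : ℕ) < a then μ ⟨i, h⟩ else 0

/-- Extension by zero of an exponent vector on the last `b` of `a + b` variables. -/
def extB (a b : ℕ) (ν : Fin b → ℤ) : Fin (a + b) → ℤ :=
  fun i => if _ : (i : ℕ) < a then 0 else ν ⟨(i : ℕ) - a, by have := i.isLt; omega⟩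

lemma extA_add (a b : ℕ) (μ ν : Fin a → ℤ) :
    extA a b (μ + ν) = extA a b μ + extA a b ν := by
  funext i
  simp only [extA, Pi.add_apply]
  split <;> simp

lemma extB_add (a b : ℕ) (μ ν : Fin b → ℤ) :
    extB a b (μ + ν) = extB a b μ + extB a b ν := by
  funext i
  simp only [extB, Pi.add_apply]
  split <;> simp

/-- On exponents, the substitution `f(s₁,…,s_a) ↦ f(z s₁, …, z s_a)` followed by the
inclusion into the first `a` of `a + b` variables: a monomial `s^μ z^α` is sent to
`s^(extA μ) z^(α + (Σᵢ μᵢ)·zv)`, where `zv : A` is the exponent vector of `z`. -/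
def zinjHom {A : Type} [AddCommGroup A] (zv : A) (a b : ℕ) :
    ((Fin a → ℤ) × A) →+ ((Fin (a + b) → ℤ) × A) :=
  AddMonoidHom.mk' (fun p => (extA a b p.1, p.2 + (∑ i, p.1 i) • zv))
    (by
      intro p q
      refine Prod.ext (extA_add a b p.1 q.1) ?_
      simp only [Prod.snd_add]
      show p.2 + q.2 + (∑ i, (p.1 i + q.1 i)) • zv = _
      rw [Finset.sum_add_distrib, add_smul]
      abel)

/-- On exponents, the inclusion of the last `b` of `a + b` variables. -/
def winjHom {A : Type} [AddCommGroup A] (a b : ℕ) :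
    ((Fin b → ℤ) × A) →+ ((Fin (a + b) → ℤ) × A) :=
  AddMonoidHom.mk' (fun p => (extB a b p.1, p.2))
    (fun p q => Prod.ext (extB_add a b p.1 q.1) rfl)

/-- The inclusion `L n → LL n A` (no formal-variable exponents). -/
def inclz (A : Type) [AddCommGroup A] {n : ℕ} : L n →+* LL n A :=
  mdr (AddMonoidHom.inl (Fin n → ℤ) A)

/-- The vertex operation
`Y(f,z)g = (1/(a!·b!)) Σ_{σ ∈ S_{a+b}} σ·(f(z s₁,…,z s_a)·g(s_{a+1},…,s_{a+b}))`,
where the formal variable `z` has exponent vector `zv : A` and `Y` acts coefficientwise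
on Laurent-polynomial coefficients in additional formal variables. -/
def Yop {A : Type} [AddCommGroup A] (zv : A) {a b : ℕ}
    (f : LL a A) (g : LL b A) : LL (a + b) A :=
  ((a.factorial * b.factorial : ℚ))⁻¹ •
    ∑ σ : Equiv.Perm (Fin (a + b)),
      permLL σ (mdr (zinjHom zv a b) f * mdr (winjHom a b) g)

/-- Relabelling of the variables along an equality `m = n` of their number. -/
def reindexEquiv (A : Type) [AddCommGroup A] {m n : ℕ} (h : m = n) :
    ((Fin m → ℤ) × A) ≃+ ((Fin n → ℤ) × A) where
  toFun p := (p.1 ∘ (finCongr h).symm, p.2)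
  invFun p := (p.1 ∘ (finCongr h), p.2)
  left_inv p := by
    refine Prod.ext ?_ rfl
    funext i
    simp [Function.comp]
  right_inv p := by
    refine Prod.ext ?_ rfl
    funext i
    simp [Function.comp]
  map_add' _ _ := rfl

/-- The canonical identification `LL m A ≃ LL n A` for `m = n`. -/
def reindex (A : Type) [AddCommGroup A] {m n : ℕ} (h : m = n) :
    LL m A →+* LL n A := mdr (reindexEquiv A h).toAddMonoidHom

/-- The operator `z^{deg}`, multiplying each monomial `s₁^{μ₁}⋯s_n^{μ_n}` by
`z^{μ₁+⋯+μ_n}` (with `A = ℤ` recording the exponent of the single variable `z`). -/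
def zdegOp {n : ℕ} : LL n ℤ →+* LL n ℤ :=
  mdr (AddMonoidHom.mk' (fun p => (p.1, p.2 + ∑ i, p.1 i))
    (by
      intro p q
      refine Prod.ext rfl ?_
      simp only [Prod.snd_add]
      show p.2 + q.2 + ∑ i, (p.1 i + q.1 i) = p.2 + ∑ i, p.1 i + (q.2 + ∑ i, q.1 i)
      rw [Finset.sum_add_distrib]
      ring))

end

/-!
Up to the scalar `1/(a!·b!)`, the vertex operation is the symmetrization over `S_{a+b}` of the
unsymmetrized product `f(z s₁, …, z s_a)·g(s_{a+1}, …, s_{a+b})`. On monomials that product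
concatenates exponent vectors, and it is associative with `z` and `w` combining to `z w`: on the
left-hand side the variables of `f` are scaled by `z` and then, as part of the first `a + b`
variables, by `w`. Permuting the variables of one factor amounts to a block permutation of the
product, which the outer symmetrization absorbs; hence each inner symmetrization contributes only
the order of its symmetric group, cancelling the factorial in the outer normalization. Both sides
are therefore `1/(a!·b!·c!)` times the symmetrization of the same triple product.
-/

lemma extA_add_extB {a b : ℕ} (μ : Fin a → ℤ) (ν : Fin b → ℤ) :
    extA a b μ + extB a b ν = Fin.append μ ν := by
  ext i
  cases i using Fin.addCases <;> simp [extA, extB]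

lemma sum_append {M : Type*} [AddCommMonoid M] {a b : ℕ} (μ : Fin a → M) (ν : Fin b → M) :
    ∑ i, Fin.append μ ν i = ∑ i, μ i + ∑ i, ν i := by
  simp only [Fin.sum_univ_add, Fin.append_left, Fin.append_right]

lemma mdr_single {G H : Type} [AddCommMonoid G] [AddCommMonoid H] (φ : G →+ H) (x : G) (r : ℚ) :
    mdr φ (.single x r) = .single (φ x) r :=
  AddMonoidAlgebra.mapDomain_single

/-- The block permutation `σ × τ ∈ S_a × S_b ⊆ S_{a+b}`, acting by `σ` on the first `a` indices and
by `τ` on the last `b`. -/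
def blockPerm {a b : ℕ} (σ : Equiv.Perm (Fin a)) (τ : Equiv.Perm (Fin b)) :
    Equiv.Perm (Fin (a + b)) :=
  finSumFinEquiv.permCongr (Equiv.sumCongr σ τ)

lemma append_comp_blockPerm_symm {α : Type*} {a b : ℕ} (σ : Equiv.Perm (Fin a))
    (τ : Equiv.Perm (Fin b)) (μ : Fin a → α) (ν : Fin b → α) :
    Fin.append μ ν ∘ (blockPerm σ τ).symm = Fin.append (μ ∘ σ.symm) (ν ∘ τ.symm) := by
  ext i
  cases i using Fin.addCases <;> simp [blockPerm, Equiv.permCongr_def]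

section

variable {A : Type} [AddCommGroup A]

lemma permLL_single {n : ℕ} (σ : Equiv.Perm (Fin n)) (μ : Fin n → ℤ) (α : A) (r : ℚ) :
    permLL σ (.single (μ, α) r) = .single (μ ∘ σ.symm, α) r :=
  mdr_single _ _ _

lemma permLL_one {n : ℕ} (x : LL n A) : permLL 1 x = x :=
  DFunLike.congr_fun AddMonoidAlgebra.mapDomainRingHom_id x

lemma permLL_mul {n : ℕ} (σ τ : Equiv.Perm (Fin n)) (x : LL n A) :
    permLL (σ * τ) x = permLL σ (permLL τ x) := by
  have permHomLL_mul : permHomLL (A := A) (σ * τ) = (permHomLL σ).comp (permHomLL τ) := rfl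
  rw [permLL, mdr, permHomLL_mul, AddMonoidAlgebra.mapDomainRingHom_comp]
  rfl

lemma reindex_single {m n : ℕ} (e : m = n) (μ : Fin m → ℤ) (α : A) (r : ℚ) :
    reindex A e (.single (μ, α) r) = .single (μ ∘ Fin.cast e.symm, α) r :=
  mdr_single _ _ _

lemma reindex_permLL {m n : ℕ} (e : m = n) (σ : Equiv.Perm (Fin m)) (x : LL m A) :
    reindex A e (permLL σ x) = permLL ((finCongr e).permCongr σ) (reindex A e x) := by
  subst e
  induction x using AddMonoidAlgebra.induction_linear with
  | zero => simp only [map_zero]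
  | add x y hx hy => simp only [map_add, hx, hy]
  | single p r =>
    obtain ⟨μ, α⟩ := p
    simp only [permLL_single, reindex_single]
    rfl

/-- The symmetrization `x ↦ Σ_{σ ∈ S_n} σ·x`, not divided by `n!`. -/
noncomputable def symmetrize {n : ℕ} : LL n A →ₗ[ℚ] LL n A :=
  ∑ σ : Equiv.Perm (Fin n), (permLL σ).toAddMonoidHom.toRatLinearMap

lemma symmetrize_apply {n : ℕ} (x : LL n A) :
    symmetrize x = ∑ σ : Equiv.Perm (Fin n), permLL σ x := by
  simp [symmetrize]

lemma symmetrize_permLL {n : ℕ} (τ : Equiv.Perm (Fin n)) (x : LL n A) :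
    symmetrize (permLL τ x) = symmetrize x := by
  simp only [symmetrize_apply, ← permLL_mul]
  exact Equiv.sum_comp (Equiv.mulRight τ) fun σ => permLL σ x

lemma reindex_symmetrize {m n : ℕ} (e : m = n) (x : LL m A) :
    reindex A e (symmetrize x) = symmetrize (reindex A e x) := by
  simp only [symmetrize_apply, map_sum, reindex_permLL]
  exact Equiv.sum_comp (finCongr e).permCongr fun σ => permLL σ (reindex A e x)

/-- The unsymmetrized vertex operation `f(z s₁, …, z s_a)·g(s_{a+1}, …, s_{a+b})`, as a bilinear
map; `zv` is the exponent vector of `z`. -/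
noncomputable def dilatedMul (zv : A) {a b : ℕ} : LL a A →ₗ[ℚ] LL b A →ₗ[ℚ] LL (a + b) A :=
  (LinearMap.mul ℚ (LL (a + b) A)).compl₁₂
    (mdr (zinjHom zv a b)).toAddMonoidHom.toRatLinearMap
    (mdr (winjHom a b)).toAddMonoidHom.toRatLinearMap

lemma Yop_eq_smul_symmetrize (zv : A) {a b : ℕ} (f : LL a A) (g : LL b A) :
    Yop zv f g = (a.factorial * b.factorial : ℚ)⁻¹ • symmetrize (dilatedMul zv f g) := by
  rw [symmetrize_apply]
  rfl

lemma dilatedMul_single_single (zv : A) {a b : ℕ} (μ : Fin a → ℤ) (ν : Fin b → ℤ) (α β : A)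
    (r s : ℚ) :
    dilatedMul zv (.single (μ, α) r) (.single (ν, β) s) =
      .single (Fin.append μ ν, α + (∑ i, μ i) • zv + β) (r * s) := by
  change mdr (zinjHom zv a b) _ * mdr (winjHom a b) _ = _
  rw [mdr_single, mdr_single, AddMonoidAlgebra.single_mul_single, ← extA_add_extB]
  rfl

lemma dilatedMul_permLL_permLL (zv : A) {a b : ℕ} (σ : Equiv.Perm (Fin a))
    (τ : Equiv.Perm (Fin b)) (f : LL a A) (g : LL b A) :
    dilatedMul zv (permLL σ f) (permLL τ g) = permLL (blockPerm σ τ) (dilatedMul zv f g) := by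
  induction f using AddMonoidAlgebra.induction_linear with
  | zero => simp only [map_zero, LinearMap.zero_apply]
  | add f₁ f₂ h₁ h₂ => simp only [map_add, LinearMap.add_apply, h₁, h₂]
  | single p r =>
    induction g using AddMonoidAlgebra.induction_linear with
    | zero => simp only [map_zero]
    | add g₁ g₂ h₁ h₂ => simp only [map_add, h₁, h₂]
    | single q s =>
      obtain ⟨μ, α⟩ := p
      obtain ⟨ν, β⟩ := q
      simp only [permLL_single, dilatedMul_single_single, append_comp_blockPerm_symm,
        Function.comp_apply, Equiv.sum_comp σ.symm μ]

lemma reindex_dilatedMul_dilatedMul_single (z w : A) {a b c : ℕ} (μ : Fin a → ℤ) (ν : Fin b → ℤ)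
    (ξ : Fin c → ℤ) (α β γ : A) (r s t : ℚ) :
    reindex A (Nat.add_assoc a b c)
        (dilatedMul w (dilatedMul z (.single (μ, α) r) (.single (ν, β) s)) (.single (ξ, γ) t)) =
      dilatedMul (z + w) (.single (μ, α) r)
        (dilatedMul w (.single (ν, β) s) (.single (ξ, γ) t)) := by
  have exponent_append : Fin.append (Fin.append μ ν) ξ ∘ Fin.cast (Nat.add_assoc a b c).symm =
      Fin.append μ (Fin.append ν ξ) := by
    rw [Fin.append_assoc]
    rfl
  simp only [dilatedMul_single_single, reindex_single, exponent_append, sum_append, mul_assoc]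
  congr 2
  module

lemma reindex_dilatedMul_dilatedMul (z w : A) {a b c : ℕ} (f : LL a A) (g : LL b A)
    (h : LL c A) :
    reindex A (Nat.add_assoc a b c) (dilatedMul w (dilatedMul z f g) h) =
      dilatedMul (z + w) f (dilatedMul w g h) := by
  induction f using AddMonoidAlgebra.induction_linear with
  | zero => simp only [map_zero, LinearMap.zero_apply]
  | add f₁ f₂ h₁ h₂ => simp only [map_add, LinearMap.add_apply, h₁, h₂]
  | single p r =>
    induction g using AddMonoidAlgebra.induction_linear with
    | zero => simp only [map_zero, LinearMap.zero_apply]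
    | add g₁ g₂ h₁ h₂ => simp only [map_add, LinearMap.add_apply, h₁, h₂]
    | single q s =>
      induction h using AddMonoidAlgebra.induction_linear with
      | zero => simp only [map_zero]
      | add k₁ k₂ h₁ h₂ => simp only [map_add, h₁, h₂]
      | single o t => exact reindex_dilatedMul_dilatedMul_single z w ..

lemma symmetrize_dilatedMul_symmetrize_left (zv : A) {a b : ℕ} (f : LL a A) (g : LL b A) :
    symmetrize (dilatedMul zv (symmetrize f) g) =
      (a.factorial : ℚ) • symmetrize (dilatedMul zv f g) := by
  have absorb (σ : Equiv.Perm (Fin a)) :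
      symmetrize (dilatedMul zv (permLL σ f) g) = symmetrize (dilatedMul zv f g) := by
    simpa only [permLL_one, symmetrize_permLL] using
      congrArg symmetrize (dilatedMul_permLL_permLL zv σ 1 f g)
  simp only [symmetrize_apply f, map_sum, LinearMap.sum_apply, absorb, Finset.sum_const,
    Finset.card_univ, Fintype.card_perm, Fintype.card_fin, Nat.cast_smul_eq_nsmul]

lemma symmetrize_dilatedMul_symmetrize_right (zv : A) {a b : ℕ} (f : LL a A) (g : LL b A) :
    symmetrize (dilatedMul zv f (symmetrize g)) =
      (b.factorial : ℚ) • symmetrize (dilatedMul zv f g) := by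
  have absorb (τ : Equiv.Perm (Fin b)) :
      symmetrize (dilatedMul zv f (permLL τ g)) = symmetrize (dilatedMul zv f g) := by
    simpa only [permLL_one, symmetrize_permLL] using
      congrArg symmetrize (dilatedMul_permLL_permLL zv 1 τ f g)
  simp only [symmetrize_apply g, map_sum, absorb, Finset.sum_const, Finset.card_univ,
    Fintype.card_perm, Fintype.card_fin, Nat.cast_smul_eq_nsmul]

lemma Yop_Yop_left (z w : A) {a b c : ℕ} (f : LL a A) (g : LL b A) (h : LL c A) :
    Yop w (Yop z f g) h = (a.factorial * b.factorial * c.factorial : ℚ)⁻¹ •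
      symmetrize (dilatedMul w (dilatedMul z f g) h) := by
  have factorial_ne_zero : ((a + b).factorial : ℚ) ≠ 0 := mod_cast (a + b).factorial_ne_zero
  simp only [Yop_eq_smul_symmetrize, map_smul, LinearMap.smul_apply,
    symmetrize_dilatedMul_symmetrize_left, smul_smul]
  congr 1
  field_simp

lemma Yop_Yop_right (z w : A) {a b c : ℕ} (f : LL a A) (g : LL b A) (h : LL c A) :
    Yop z f (Yop w g h) = (a.factorial * b.factorial * c.factorial : ℚ)⁻¹ •
      symmetrize (dilatedMul z f (dilatedMul w g h)) := by
  have factorial_ne_zero : ((b + c).factorial : ℚ) ≠ 0 := mod_cast (b + c).factorial_ne_zero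
  simp only [Yop_eq_smul_symmetrize, map_smul, symmetrize_dilatedMul_symmetrize_right, smul_smul]
  congr 1
  field_simp

theorem stmt_15_general (z w : A) {a b c : ℕ} (f : LL a A) (g : LL b A) (h : LL c A) :
    reindex A (Nat.add_assoc a b c) (Yop w (Yop z f g) h) = Yop (z + w) f (Yop w g h) := by
  rw [Yop_Yop_left, Yop_Yop_right, map_rat_smul, reindex_symmetrize,
    reindex_dilatedMul_dilatedMul]

end

/-- Weak associativity `Y(Y(f,z)g, w)h = Y(f,zw)(Y(g,w)h)` in
`S_{a+b+c}^±[z,z⁻¹,w,w⁻¹]`, for symmetric Laurent polynomials `f ∈ S_a^±`, `g ∈ S_b^±`,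
`h ∈ S_c^±`.  Here the exponents of `(z,w)` lie in `ℤ × ℤ`, so `z` has exponent vector
`(1,0)`, `w` has `(0,1)` and `zw` has `(1,1)`, and `Fin ((a+b)+c)` is identified with
`Fin (a+(b+c))` by `reindex`. -/
theorem stmt_15 (a b c : ℕ) (f : L a) (g : L b) (h : L c)
    (hf : SymmLaurent f) (hg : SymmLaurent g) (hh : SymmLaurent h) :
    reindex (ℤ × ℤ) (Nat.add_assoc a b c)
        (Yop ((0, 1) : ℤ × ℤ)
          (Yop ((1, 0) : ℤ × ℤ) (inclz (ℤ × ℤ) f) (inclz (ℤ × ℤ) g))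
          (inclz (ℤ × ℤ) h))
      = Yop ((1, 1) : ℤ × ℤ) (inclz (ℤ × ℤ) f)
          (Yop ((0, 1) : ℤ × ℤ) (inclz (ℤ × ℤ) g) (inclz (ℤ × ℤ) h)) := by
  simpa only [Prod.mk_add_mk, add_zero, zero_add] using
    stmt_15_general ((1, 0) : ℤ × ℤ) (0, 1) (inclz _ f) (inclz _ g) (inclz _ h)
end

section
/- For all natural numbers a, b and all symmetric Laurent polynomials f ∈ S_a^±, g ∈ S_b^±, the skew-symmetry identity Y(f,z)g = z^{deg}( Y(g,z⁻¹)f ) holds in S_{a+b}^±[z,z⁻¹], where Y(g,z⁻¹)f is obtained from Y(g,w)f by substituting w = z⁻¹. -/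
open scoped BigOperators

/-!
Every permutation of the variables is summed over, so a symmetrized sum does not depend on
the bijection by which `Fin (b + a)` is identified with `Fin (a + b)`: `reindex` may be replaced by
the flip of the two blocks. The flip turns `f(s_{b+1}, …) · g(z⁻¹ s₁, …)` into
`f(s₁, …) · g(z⁻¹ s_{a+1}, …)`, and `z^{deg}` moves the factor `z⁻¹` on the variables of `g` to a
factor `z` on those of `f`.
-/

lemma mdr_mdr {G H K : Type} [AddCommMonoid G] [AddCommMonoid H] [AddCommMonoid K]
    (φ : H →+ K) (ψ : G →+ H) (x : AddMonoidAlgebra ℚ G) :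
    mdr φ (mdr ψ x) = mdr (φ.comp ψ) x := by
  simp only [mdr, AddMonoidAlgebra.mapDomainRingHom_comp, RingHom.comp_apply]

section Relabel

variable {A : Type} [AddCommGroup A] {l m n : ℕ}

/-- The action on exponents of the relabelling `s_i ↦ s_{e(i)}` of the variables along a
bijection `e`, fixing the formal variables. -/
def relabelHom (e : Fin m ≃ Fin n) : ((Fin m → ℤ) × A) →+ ((Fin n → ℤ) × A) :=
  AddMonoidHom.mk' (fun p => (p.1 ∘ e.symm, p.2)) (fun _ _ => rfl)

/-- The relabelling `s_i ↦ s_{e(i)}` of the variables of a Laurent polynomial along a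
bijection `e`. -/
noncomputable def relabel (e : Fin m ≃ Fin n) : LL m A →+* LL n A :=
  mdr (relabelHom e)

lemma permLL_eq_relabel (σ : Equiv.Perm (Fin n)) :
    (permLL σ : LL n A →+* LL n A) = relabel σ := rfl

lemma reindex_eq_relabel (h : m = n) : reindex A h = relabel (finCongr h) := rfl

lemma relabel_relabel (e : Fin l ≃ Fin m) (e' : Fin m ≃ Fin n) (x : LL l A) :
    relabel e' (relabel e x) = relabel (e.trans e') x :=
  mdr_mdr _ _ x

lemma relabel_sum_permLL (e e' : Fin m ≃ Fin n) (x : LL m A) :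
    relabel e (∑ σ : Equiv.Perm (Fin m), permLL σ x)
      = ∑ σ : Equiv.Perm (Fin n), permLL σ (relabel e' x) := by
  simp only [map_sum, permLL_eq_relabel, relabel_relabel]
  refine Fintype.sum_equiv (e'.equivCongr e) _ _ fun σ => congrArg (relabel · x) ?_
  ext i
  simp

end Relabel

section DegreeShift

variable {A : Type} [AddCommGroup A] {m n : ℕ}

/-- The action on exponents of the substitution `s_i ↦ z s_i`, where the formal variable `z` has
exponent vector `zv`. -/
def zdegHom (zv : A) (n : ℕ) : ((Fin n → ℤ) × A) →+ ((Fin n → ℤ) × A) :=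
  AddMonoidHom.mk' (fun p => (p.1, p.2 + (∑ i, p.1 i) • zv)) fun p q => by
    ext
    · rfl
    · simp only [Prod.fst_add, Prod.snd_add, Pi.add_apply, Finset.sum_add_distrib, add_smul]
      abel

/-- The operator `z^{deg}` for a formal variable `z` of exponent vector `zv` in any group `A` of
exponents. -/
noncomputable def zdeg (zv : A) : LL n A →+* LL n A :=
  mdr (zdegHom zv n)

lemma zdegOp_eq_zdeg : (zdegOp : LL n ℤ →+* LL n ℤ) = zdeg 1 := by
  refine congrArg mdr (AddMonoidHom.ext fun p => ?_)
  simp [zdegHom]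

lemma zdeg_relabel (zv : A) (e : Fin m ≃ Fin n) (x : LL m A) :
    zdeg zv (relabel e x) = relabel e (zdeg zv x) := by
  simp only [zdeg, relabel, mdr_mdr]
  congr 2
  refine AddMonoidHom.ext fun p => Prod.ext rfl ?_
  simp [zdegHom, relabelHom, Equiv.sum_comp e.symm p.1]

lemma zdeg_sum_permLL (zv : A) (x : LL n A) :
    zdeg zv (∑ σ : Equiv.Perm (Fin n), permLL σ x)
      = ∑ σ : Equiv.Perm (Fin n), permLL σ (zdeg zv x) := by
  simp only [map_sum, permLL_eq_relabel, zdeg_relabel]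

end DegreeShift

section BlockInclusion

variable {A : Type} [AddCommGroup A] {a b : ℕ}

lemma sum_extA (μ : Fin a → ℤ) : ∑ i, extA a b μ i = ∑ i, μ i := by
  simp [Fin.sum_univ_add, extA]

lemma sum_extB (ν : Fin b → ℤ) : ∑ i, extB a b ν i = ∑ i, ν i := by
  simp [Fin.sum_univ_add, extB]

lemma extA_comp_finAddFlip (μ : Fin a → ℤ) : extA a b μ ∘ finAddFlip = extB b a μ := by
  ext i
  induction i using Fin.addCases <;> simp [extA, extB]

lemma extB_comp_finAddFlip (ν : Fin b → ℤ) : extB a b ν ∘ finAddFlip = extA b a ν := by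
  ext i
  induction i using Fin.addCases <;> simp [extA, extB]

lemma zdeg_zinjHom (zv wv : A) (f : LL a A) :
    zdeg zv (mdr (zinjHom wv a b) f) = mdr (zinjHom (wv + zv) a b) f := by
  rw [zdeg, mdr_mdr]
  congr 2
  refine AddMonoidHom.ext fun p => Prod.ext rfl ?_
  simp [zdegHom, zinjHom, sum_extA, add_assoc]

lemma relabel_finAddFlip_zinjHom_zero (f : LL a A) :
    relabel finAddFlip (mdr (zinjHom 0 a b) f) = mdr (winjHom b a) f := by
  rw [relabel, mdr_mdr]
  congr 2
  refine AddMonoidHom.ext fun p => Prod.ext (extA_comp_finAddFlip p.1) ?_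
  simp [relabelHom, zinjHom, winjHom]

lemma relabel_finAddFlip_zdeg_winjHom (zv : A) (g : LL b A) :
    relabel finAddFlip (zdeg zv (mdr (winjHom a b) g)) = mdr (zinjHom zv b a) g := by
  simp only [relabel, zdeg, mdr_mdr]
  congr 2
  refine AddMonoidHom.ext fun p => Prod.ext (extB_comp_finAddFlip p.1) ?_
  simp [relabelHom, zdegHom, zinjHom, winjHom, sum_extB]

end BlockInclusion

theorem stmt_16_general {A : Type} [AddCommGroup A] (zv : A) {a b : ℕ} (f : LL a A) (g : LL b A) :
    Yop zv f g = reindex A (Nat.add_comm b a) (zdeg zv (Yop (-zv) g f)) := by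
  have flip_summand :
      relabel finAddFlip (zdeg zv (mdr (zinjHom (-zv) b a) g * mdr (winjHom b a) f))
        = mdr (zinjHom zv a b) f * mdr (winjHom a b) g := by
    rw [map_mul, map_mul, zdeg_zinjHom, neg_add_cancel, relabel_finAddFlip_zinjHom_zero,
      relabel_finAddFlip_zdeg_winjHom, mul_comm]
  rw [Yop, Yop, map_rat_smul, map_rat_smul, zdeg_sum_permLL, reindex_eq_relabel,
    relabel_sum_permLL _ finAddFlip, flip_summand, mul_comm (b.factorial : ℚ)]

/-- Skew symmetry `Y(f,z)g = z^{deg}(Y(g,z⁻¹)f)` in `S_{a+b}^±[z,z⁻¹]`,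
for symmetric Laurent polynomials `f ∈ S_a^±` and `g ∈ S_b^±`.  Here the exponent of `z`
lies in `ℤ`, `Y(g,z⁻¹)f` is the vertex operation with `z`-exponent vector `-1`, and
`Fin (b+a)` is identified with `Fin (a+b)` by `reindex`. -/
theorem stmt_16 (a b : ℕ) (f : L a) (g : L b)
    (hf : SymmLaurent f) (hg : SymmLaurent g) :
    Yop (1 : ℤ) (inclz ℤ f) (inclz ℤ g)
      = reindex ℤ (Nat.add_comm b a)
          (zdegOp (Yop (-1 : ℤ) (inclz ℤ g) (inclz ℤ f))) := by
  rw [zdegOp_eq_zdeg]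
  exact stmt_16_general 1 _ _
end
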